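/- The maximal size of a clique in Γ_{-1,0} is twelve, and there are no maximal cliques of size eleven in Γ_{-1,0}. Moreover, there are exactly 179200 cliques of size twelve in Γ_{-1,0}, and the Weyl group W acts transitively on the set of cliques of size twelve in Γ_{-1,0}. -/

import Mathlib

noncomputable section

/-- The standard dot product on ℝ^8. -/
def dot (a b : Fin 8 → ℝ) : ℝ := ∑ i, a i * b i

/-- Membership in the E8 lattice Λ: all coordinates are integers or all lie in ℤ + 1/2,
and the coordinates sum to an even integer. -/
def inLambda (a : Fin 8 → ℝ) : Prop :=
  ((∀ i, ∃ n : ℤ, a i = n) ∨ (∀ i, ∃ n : ℤ, a i = n + 1 / 2)) ∧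
    ∃ n : ℤ, (∑ i, a i) = 2 * n

/-- The E8 root system E: lattice vectors of squared norm 2. -/
def isRoot (a : Fin 8 → ℝ) : Prop := inLambda a ∧ dot a a = 2

/-- The Weyl group W: linear isometries of ℝ^8 mapping the root system E onto itself. -/
def IsWeyl (w : (Fin 8 → ℝ) ≃ₗ[ℝ] (Fin 8 → ℝ)) : Prop :=
  (∀ a b : Fin 8 → ℝ, dot (w a) (w b) = dot a b) ∧
    (⇑w '' {a | isRoot a} = {a | isRoot a})

/-- A clique in the colored graph `Γ_c`: a set of roots whose pairwise dot products
lie in the color set `c`. -/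
def IsClique (c : Set ℝ) (K : Finset (Fin 8 → ℝ)) : Prop :=
  (∀ e ∈ K, isRoot e) ∧ ∀ e ∈ K, ∀ f ∈ K, e ≠ f → dot e f ∈ c

/-- A maximal clique in `Γ_c`: a clique not properly contained in another clique. -/
def IsMaxClique (c : Set ℝ) (K : Finset (Fin 8 → ℝ)) : Prop :=
  IsClique c K ∧ ∀ K' : Finset (Fin 8 → ℝ), IsClique c K' → K ⊆ K' → K' = K

/-!
A clique in `Γ_{-1,0}` spans no acute angle, so a linear relation among its members stays valid
when the coefficients are replaced by their absolute values. Hence the minimal dependent subsets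
(the circuits, which are affine Dynkin diagrams) are pairwise orthogonal, and a clique of size
`11` in dimension `8` has at least three of them. Their sizes are at least `3` and sum to at
most `11`, so either two of them are triangles `Ã₂` or the sizes are `3, 4, 4`. The second case
would give a sublattice `A₂ ⊕ A₃ ⊕ A₃` of `Λ`, which Parseval's identity for a suitable root
excludes.

The roots orthogonal to two orthogonal triangles form two copies of `A₂`, so the clique lies in
the union of four orthogonal triangles, with a choice of sign for the last two. Two orthogonal
triangles are determined by a frame of four roots. The stabilizer in `W` of the first `k` roots
of the frame is transitive on the possible `k + 1`-st ones, and the signs are changed by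
reflections. So `W` is transitive on the cliques of size `12`, and counting the frames contained
in a clique, one root at a time, gives `(240 / 12) * (56 / 2) * (72 / 9) * (20 / 2) * 4 =
179200` of them.
-/

open Finset
open scoped Matrix Pointwise

section PositiveDependence

variable {ι : Type*} {K C D : Finset (ι → ℝ)} {u v : ι → ℝ}

/-- A nonempty finite set of vectors satisfying a linear relation with positive coefficients. -/
def PositivelyDependent (C : Finset (ι → ℝ)) : Prop :=
  C.Nonempty ∧ ∃ c : (ι → ℝ) → ℝ, (∀ v ∈ C, 0 < c v) ∧ ∑ v ∈ C, c v • v = 0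

/-- A minimal positively dependent set of vectors. For roots of a simply laced root system in
obtuse position this is the vertex set of a connected affine Dynkin diagram. -/
def IsCircuit (C : Finset (ι → ℝ)) : Prop :=
  Minimal PositivelyDependent C

open Classical in
/-- The circuits contained in a finite set of vectors. -/
def circuits (K : Finset (ι → ℝ)) : Finset (Finset (ι → ℝ)) :=
  {C ∈ K.powerset | IsCircuit C}

lemma mem_circuits : C ∈ circuits K ↔ C ⊆ K ∧ IsCircuit C := by
  simp only [circuits, mem_filter, mem_powerset]

lemma PositivelyDependent.exists_isCircuit (hD : PositivelyDependent D) :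
    ∃ C ⊆ D, IsCircuit C :=
  exists_minimal_le_of_wellFoundedLT PositivelyDependent D hD

variable [Fintype ι]

/-- A finite set of vectors any two of which enclose an angle of at least `π / 2`. -/
def IsObtuse (K : Finset (ι → ℝ)) : Prop :=
  (K : Set (ι → ℝ)).Pairwise fun u v => u ⬝ᵥ v ≤ 0

lemma IsObtuse.mono (hK : IsObtuse K) (h : C ⊆ K) : IsObtuse C :=
  Set.Pairwise.mono (coe_subset.2 h) hK

lemma sum_mul_dotProduct_eq_zero {c : (ι → ℝ) → ℝ} (hc : ∑ v ∈ C, c v • v = 0) (x : ι → ℝ) :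
    ∑ v ∈ C, c v * (v ⬝ᵥ x) = 0 := by
  simpa only [sum_dotProduct, smul_dotProduct, smul_eq_mul, zero_dotProduct]
    using congrArg (· ⬝ᵥ x) hc

-- Replacing the coefficients by their absolute values cannot increase the squared norm.
lemma IsObtuse.sum_abs_smul_eq_zero (hK : IsObtuse K) {c : (ι → ℝ) → ℝ}
    (hc : ∑ v ∈ K, c v • v = 0) : ∑ v ∈ K, |c v| • v = 0 := by
  have expand (d : (ι → ℝ) → ℝ) : (∑ u ∈ K, d u • u) ⬝ᵥ (∑ v ∈ K, d v • v) =
      ∑ u ∈ K, ∑ v ∈ K, d u * d v * (u ⬝ᵥ v) := by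
    simp_rw [sum_dotProduct, dotProduct_sum, smul_dotProduct, dotProduct_smul, smul_smul,
      smul_eq_mul]
  refine dotProduct_self_eq_zero.1 (le_antisymm ?_ (sum_nonneg fun i _ => mul_self_nonneg _))
  calc (∑ u ∈ K, |c u| • u) ⬝ᵥ (∑ v ∈ K, |c v| • v)
      = ∑ u ∈ K, ∑ v ∈ K, |c u| * |c v| * (u ⬝ᵥ v) := expand fun v => |c v|
    _ ≤ ∑ u ∈ K, ∑ v ∈ K, c u * c v * (u ⬝ᵥ v) := by
      refine sum_le_sum fun u hu => sum_le_sum fun v hv => ?_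
      obtain rfl | huv := eq_or_ne u v
      · rw [abs_mul_abs_self]
      · rw [← abs_mul]
        exact mul_le_mul_of_nonpos_right (le_abs_self _) (hK hu hv huv)
    _ = 0 := by rw [← expand, hc, dotProduct_zero]

lemma IsObtuse.exists_positivelyDependent (hK : IsObtuse K) (hcard : Fintype.card ι < #K) :
    ∃ D ⊆ K, PositivelyDependent D := by
  classical
  obtain ⟨c, hc, v, hv, hcv⟩ := Module.exists_nontrivial_relation_of_finrank_lt_card
    (R := ℝ) (M := ι → ℝ) (by rwa [Module.finrank_pi])
  refine ⟨{v ∈ K | c v ≠ 0}, filter_subset _ _, ⟨v, mem_filter.2 ⟨hv, hcv⟩⟩, fun v => |c v|,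
    fun v hv => abs_pos.2 (mem_filter.1 hv).2, ?_⟩
  rw [sum_filter_of_ne fun v _ => mt fun hcv => by simp only [hcv, abs_zero, zero_smul]]
  exact hK.sum_abs_smul_eq_zero hc

lemma PositivelyDependent.dotProduct_eq_zero (hC : PositivelyDependent C) (hK : IsObtuse K)
    (hCK : C ⊆ K) (hu : u ∈ C) (hv : v ∈ K \ C) : u ⬝ᵥ v = 0 := by
  obtain ⟨-, c, hpos, hc⟩ := hC
  rw [mem_sdiff] at hv
  have hterm : ∀ u ∈ C, c u * (u ⬝ᵥ v) ≤ 0 := fun u hu =>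
    mul_nonpos_of_nonneg_of_nonpos (hpos u hu).le
      (hK (hCK hu) hv.1 (ne_of_mem_of_not_mem hu hv.2))
  exact (mul_eq_zero.1 ((sum_eq_zero_iff_of_nonpos hterm).1
    (sum_mul_dotProduct_eq_zero hc v) u hu)).resolve_left
    (hpos u hu).ne'

lemma IsObtuse.dotProduct_eq_zero_of_sum_eq_zero {κ : Type*} [Fintype κ] {t : κ → ι → ℝ}
    (hK : IsObtuse K) (ht : ∑ i, t i = 0) (htK : ∀ i, t i ∈ K) (hv : v ∈ K) (hne : ∀ i, t i ≠ v)
    (i : κ) : t i ⬝ᵥ v = 0 := by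
  refine (sum_eq_zero_iff_of_nonpos fun i _ => hK (htK i) hv (hne i)).1 ?_ i (mem_univ i)
  rw [← sum_dotProduct, ht, zero_dotProduct]

-- The part of a relation of `D` supported on `C` is orthogonal to the remaining part, so it is a
-- relation by itself.
lemma IsCircuit.subset_or_disjoint (hC : IsCircuit C) (hD : PositivelyDependent D)
    (hK : IsObtuse K) (hCK : C ⊆ K) (hDK : D ⊆ K) : C ⊆ D ∨ Disjoint C D := by
  classical
  rw [disjoint_iff_inter_eq_empty, inter_comm, ← not_nonempty_iff_eq_empty]
  refine or_iff_not_imp_right.2 fun hne => ?_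
  obtain ⟨-, d, hpos, hd⟩ := hD
  have horth : (∑ u ∈ D ∩ C, d u • u) ⬝ᵥ (∑ v ∈ D \ C, d v • v) = 0 := by
    simp only [sum_dotProduct, dotProduct_sum, smul_dotProduct, dotProduct_smul]
    refine sum_eq_zero fun v hv => ?_
    rw [sum_eq_zero fun u hu => ?_, smul_zero]
    rw [hC.prop.dotProduct_eq_zero hK hCK (mem_of_mem_inter_right hu)
      (sdiff_subset_sdiff hDK Subset.rfl hv), smul_zero]
  have hinter : ∑ u ∈ D ∩ C, d u • u = 0 := by
    rw [← sum_inter_add_sum_sdiff D C] at hd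
    rwa [eq_neg_of_add_eq_zero_right hd, dotProduct_neg, neg_eq_zero, dotProduct_self_eq_zero]
      at horth
  have hdep : PositivelyDependent (D ∩ C) :=
    ⟨not_not.1 hne, d, fun v hv => hpos v (mem_of_mem_inter_left hv), hinter⟩
  exact (hC.le_of_le hdep inter_subset_right).trans inter_subset_left

lemma IsObtuse.pairwiseDisjoint_circuits (hK : IsObtuse K) :
    (circuits K : Set (Finset (ι → ℝ))).PairwiseDisjoint id := by
  intro C hC D hD hne
  rw [mem_coe, mem_circuits] at hC hD
  exact (hC.2.subset_or_disjoint hD.2.prop hK hC.1 hD.1).resolve_left fun h =>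
    hne (h.antisymm (hD.2.le_of_le hC.2.prop h))

lemma IsObtuse.sum_card_circuits_le (hK : IsObtuse K) : ∑ C ∈ circuits K, #C ≤ #K := by
  classical
  calc ∑ C ∈ circuits K, #C = #((circuits K).biUnion id) :=
        (card_biUnion hK.pairwiseDisjoint_circuits).symm
    _ ≤ #K := card_le_card (biUnion_subset.2 fun C hC => (mem_circuits.1 hC).1)

-- Removing one vector from each circuit leaves a linearly independent set.
lemma IsObtuse.card_le_card_add_card_circuits (hK : IsObtuse K) :
    #K ≤ Fintype.card ι + #(circuits K) := by
  classical
  have hne : ∀ C ∈ circuits K, ∃ v, v ∈ C := fun C hC => (mem_circuits.1 hC).2.prop.1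
  choose! r hr using hne
  have hrest : #(K \ (circuits K).image r) ≤ Fintype.card ι := by
    by_contra! hcard
    obtain ⟨D, hDK, hD⟩ := (hK.mono sdiff_subset).exists_positivelyDependent hcard
    obtain ⟨C, hCD, hC⟩ := hD.exists_isCircuit
    have hCK : C ∈ circuits K := mem_circuits.2 ⟨hCD.trans (hDK.trans sdiff_subset), hC⟩
    exact (mem_sdiff.1 (hDK (hCD (hr C hCK)))).2 (mem_image_of_mem r hCK)
  calc #K ≤ #(K \ (circuits K).image r) + #((circuits K).image r) :=
        card_le_card_sdiff_add_card
    _ ≤ Fintype.card ι + #(circuits K) := add_le_add hrest card_image_le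

end PositiveDependence

section SimplyLaced

variable {ι : Type*} [Fintype ι] {K C : Finset (ι → ℝ)}

/-- Vectors of squared norm `2` with pairwise dot products `-1` and `0`, as for the simple roots of
a (possibly affine) simply laced Dynkin diagram. -/
structure IsSimplyLaced (K : Finset (ι → ℝ)) : Prop where
  norm_sq : ∀ v ∈ K, v ⬝ᵥ v = 2
  dotProduct_eq : ∀ u ∈ K, ∀ v ∈ K, u ≠ v → u ⬝ᵥ v = -1 ∨ u ⬝ᵥ v = 0

lemma eq_neg_sub_of_dotProduct_eq_neg_one {u v w : ι → ℝ} (hu : u ⬝ᵥ u = 2) (hv : v ⬝ᵥ v = 2)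
    (hw : w ⬝ᵥ w = 2) (huv : u ⬝ᵥ v = -1) (huw : u ⬝ᵥ w = -1) (hvw : v ⬝ᵥ w = -1) :
    w = -u - v := by
  have hsum : w + (u + v) = 0 := by
    rw [← dotProduct_self_eq_zero]
    simp only [add_dotProduct, dotProduct_add, dotProduct_comm v u, dotProduct_comm w u,
      dotProduct_comm w v, hu, hv, hw, huv, huw, hvw]
    norm_num
  rw [eq_neg_of_add_eq_zero_left hsum, neg_add']

namespace IsSimplyLaced

lemma mono (hK : IsSimplyLaced K) (h : C ⊆ K) : IsSimplyLaced C :=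
  ⟨fun v hv => hK.norm_sq v (h hv), fun u hu v hv => hK.dotProduct_eq u (h hu) v (h hv)⟩

lemma isObtuse (hK : IsSimplyLaced K) : IsObtuse K := fun u hu v hv huv => by
  obtain h | h := hK.dotProduct_eq u hu v hv huv <;> norm_num [h]

-- Pair the relation with a vector of maximal coefficient.
lemma three_le_card (hC : IsSimplyLaced C) (hdep : PositivelyDependent C) : 3 ≤ #C := by
  classical
  obtain ⟨hne, c, hpos, hc⟩ := hdep
  obtain ⟨u, hu, hmax⟩ := exists_max_image C c hne
  have hterm : ∀ v ∈ C.erase u, -c u ≤ c v * (v ⬝ᵥ u) := fun v hv => by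
    obtain ⟨hvu, hv⟩ := mem_erase.1 hv
    obtain h | h := hC.dotProduct_eq v hv u hu hvu <;> rw [h] <;>
      linarith [hmax v hv, hpos u hu]
  have hsum : 2 * c u + ∑ v ∈ C.erase u, c v * (v ⬝ᵥ u) = 0 := by
    rw [mul_comm, ← hC.norm_sq u hu, add_sum_erase C (fun v => c v * (v ⬝ᵥ u)) hu]
    exact sum_mul_dotProduct_eq_zero hc u
  have hle := card_nsmul_le_sum _ _ _ hterm
  rw [card_erase_of_mem hu, nsmul_eq_mul, Nat.cast_pred (card_pos.2 hne)] at hle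
  have hcard : (3 : ℝ) ≤ #C := by nlinarith [hpos u hu]
  exact_mod_cast hcard

lemma exists_eq_triangle (hC : IsSimplyLaced C) (hdep : PositivelyDependent C) (hcard : #C = 3) :
    ∃ u v, u ⬝ᵥ v = -1 ∧ C = {u, v, -u - v} := by
  obtain ⟨-, c, hpos, hc⟩ := hdep
  obtain ⟨u, v, w, huv, huw, hvw, rfl⟩ := card_eq_three.1 hcard
  have hrel : ∀ x : ι → ℝ, c u * (u ⬝ᵥ x) + (c v * (v ⬝ᵥ x) + c w * (w ⬝ᵥ x)) = 0 := fun x => by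
    rw [← sum_mul_dotProduct_eq_zero hc x, sum_insert (by simp [huv, huw]), sum_pair hvw]
  obtain ⟨hcu, hcv, -⟩ : 0 < c u ∧ 0 < c v ∧ 0 < c w := by simpa using hpos
  obtain ⟨hu, hv, hw⟩ : u ⬝ᵥ u = 2 ∧ v ⬝ᵥ v = 2 ∧ w ⬝ᵥ w = 2 := by simpa using hC.norm_sq
  have hru := hrel u
  have hrv := hrel v
  have hrw := hrel w
  rw [dotProduct_comm v u, dotProduct_comm w u, hu] at hru
  rw [dotProduct_comm w v, hv] at hrv
  rw [hw] at hrw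
  obtain ⟨h₁, h₂, h₃⟩ : u ⬝ᵥ v = -1 ∧ u ⬝ᵥ w = -1 ∧ v ⬝ᵥ w = -1 := by
    rcases hC.dotProduct_eq u (by simp) v (by simp) huv with h₁ | h₁ <;>
    rcases hC.dotProduct_eq u (by simp) w (by simp) huw with h₂ | h₂ <;>
    rcases hC.dotProduct_eq v (by simp) w (by simp) hvw with h₃ | h₃ <;>
    rw [h₁, h₂] at hru <;> rw [h₁, h₃] at hrv <;> rw [h₂, h₃] at hrw <;>
    first | exact ⟨h₁, h₂, h₃⟩ | linarith
  exact ⟨u, v, h₁, by rw [eq_neg_sub_of_dotProduct_eq_neg_one hu hv hw h₁ h₂ h₃]⟩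

-- The only affine simply laced diagram with four vertices is the 4-cycle.
lemma exists_four_cycle (hC : IsSimplyLaced C) (hdep : PositivelyDependent C) (hcard : #C = 4) :
    ∃ x₁ ∈ C, ∃ x₂ ∈ C, ∃ x₃ ∈ C, ∃ x₄ ∈ C, x₁ ⬝ᵥ x₂ = -1 ∧ x₂ ⬝ᵥ x₃ = -1 ∧ x₃ ⬝ᵥ x₄ = -1 ∧
      x₄ ⬝ᵥ x₁ = -1 ∧ x₁ ⬝ᵥ x₃ = 0 ∧ x₂ ⬝ᵥ x₄ = 0 := by
  classical
  obtain ⟨-, c, hpos, hc⟩ := hdep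
  obtain ⟨x, y, z, w, hxy, hxz, hxw, hyz, hyw, hzw, rfl⟩ := card_eq_four.1 hcard
  have hrel : ∀ v : ι → ℝ,
      c x * (x ⬝ᵥ v) + (c y * (y ⬝ᵥ v) + (c z * (z ⬝ᵥ v) + c w * (w ⬝ᵥ v))) = 0 := fun v => by
    rw [← sum_mul_dotProduct_eq_zero hc v, sum_insert (by simp [hxy, hxz, hxw]),
      sum_insert (by simp [hyz, hyw]), sum_pair hzw]
  obtain ⟨hcx, hcy, hcz, hcw⟩ : 0 < c x ∧ 0 < c y ∧ 0 < c z ∧ 0 < c w := by simpa using hpos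
  obtain ⟨hx, hy, hz, hw⟩ : x ⬝ᵥ x = 2 ∧ y ⬝ᵥ y = 2 ∧ z ⬝ᵥ z = 2 ∧ w ⬝ᵥ w = 2 := by
    simpa using hC.norm_sq
  have hrx := hrel x
  have hry := hrel y
  have hrz := hrel z
  have hrw := hrel w
  rw [hx, dotProduct_comm y x, dotProduct_comm z x, dotProduct_comm w x] at hrx
  rw [hy, dotProduct_comm z y, dotProduct_comm w y] at hry
  rw [hz, dotProduct_comm w z] at hrz
  rw [hw] at hrw
  rcases hC.dotProduct_eq x (by simp) y (by simp) hxy with hxy | hxy <;>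
  rcases hC.dotProduct_eq x (by simp) z (by simp) hxz with hxz | hxz <;>
  rcases hC.dotProduct_eq x (by simp) w (by simp) hxw with hxw | hxw <;>
  rcases hC.dotProduct_eq y (by simp) z (by simp) hyz with hyz | hyz <;>
  rcases hC.dotProduct_eq y (by simp) w (by simp) hyw with hyw | hyw <;>
  rcases hC.dotProduct_eq z (by simp) w (by simp) hzw with hzw | hzw <;>
  rw [hxy, hxz, hxw] at hrx <;> rw [hxy, hyz, hyw] at hry <;> rw [hxz, hyz, hzw] at hrz <;>
  rw [hxw, hyw, hzw] at hrw <;>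
  first
  | linarith
  | exact ⟨x, by simp, y, by simp, z, by simp, w, by simp, hxy, hyz, hzw,
      (dotProduct_comm _ _).trans hxw, hxz, hyw⟩
  | exact ⟨x, by simp, z, by simp, y, by simp, w, by simp, hxz, (dotProduct_comm _ _).trans hyz,
      hyw, (dotProduct_comm _ _).trans hxw, hxy, hzw⟩
  | exact ⟨x, by simp, y, by simp, w, by simp, z, by simp, hxy, hyw,
      (dotProduct_comm _ _).trans hzw, (dotProduct_comm _ _).trans hxz, hxw, hyz⟩

-- In a 4-cycle `x₁ x₂ x₃ x₄` these are `x₁ - x₃`, `x₂ - x₄` and `x₁ + x₃`.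
lemma exists_orthogonal_triple (hC : IsSimplyLaced C) (hdep : PositivelyDependent C)
    (hcard : #C = 4) :
    ∃ f : Fin 3 → ι → ℝ, (∀ i, f i ∈ AddSubgroup.closure (C : Set (ι → ℝ))) ∧
      ∀ i j, f i ⬝ᵥ f j = if i = j then 4 else 0 := by
  obtain ⟨x₁, h₁, x₂, h₂, x₃, h₃, x₄, h₄, h₁₂, h₂₃, h₃₄, h₄₁, h₁₃, h₂₄⟩ :=
    hC.exists_four_cycle hdep hcard
  have hmem := fun {x} (hx : x ∈ C) => AddSubgroup.subset_closure (mem_coe.2 hx)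
  refine ⟨![x₁ - x₃, x₂ - x₄, x₁ + x₃], ?_, ?_⟩
  · simp only [Fin.forall_fin_succ, Matrix.cons_val_zero, Matrix.cons_val_succ, IsEmpty.forall_iff,
      and_true]
    exact ⟨sub_mem (hmem h₁) (hmem h₃), sub_mem (hmem h₂) (hmem h₄), add_mem (hmem h₁) (hmem h₃)⟩
  · simp only [Fin.forall_fin_succ, Matrix.cons_val_zero, Matrix.cons_val_succ, IsEmpty.forall_iff,
      and_true, sub_dotProduct, dotProduct_sub, add_dotProduct, dotProduct_add,
      dotProduct_comm x₂ x₁, dotProduct_comm x₃ x₁, dotProduct_comm x₃ x₂, dotProduct_comm x₁ x₄,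
      dotProduct_comm x₄ x₂, dotProduct_comm x₄ x₃, h₁₂, h₂₃, h₃₄, h₄₁, h₁₃, h₂₄, hC.norm_sq _ h₁,
      hC.norm_sq _ h₂, hC.norm_sq _ h₃, hC.norm_sq _ h₄]
    norm_num [Fin.ext_iff]

end IsSimplyLaced

end SimplyLaced

section Orthogonality

variable {ι κ : Type*} [Fintype ι]

lemma dotProduct_eq_zero_of_mem_closure {s : Set (ι → ℝ)} {x y : ι → ℝ}
    (hs : ∀ u ∈ s, u ⬝ᵥ y = 0) (hx : x ∈ AddSubgroup.closure s) : x ⬝ᵥ y = 0 := by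
  induction hx using AddSubgroup.closure_induction with
  | mem u hu => exact hs u hu
  | zero => exact zero_dotProduct _
  | add u v _ _ hu hv => rw [add_dotProduct, hu, hv, add_zero]
  | neg u _ hu => rw [neg_dotProduct, hu, neg_zero]

lemma dotProduct_eq_zero_of_mem_closure_of_mem_closure {s t : Set (ι → ℝ)} {x y : ι → ℝ}
    (hst : ∀ u ∈ s, ∀ v ∈ t, u ⬝ᵥ v = 0) (hx : x ∈ AddSubgroup.closure s)
    (hy : y ∈ AddSubgroup.closure t) : x ⬝ᵥ y = 0 :=
  dotProduct_eq_zero_of_mem_closure (fun u hu => by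
    rw [dotProduct_comm]
    exact dotProduct_eq_zero_of_mem_closure
      (fun v hv => (dotProduct_comm v u).trans (hst u hu v hv)) hy) hx

lemma IsObtuse.dotProduct_eq_zero_of_mem_closure_circuit {K C D : Finset (ι → ℝ)} {x y : ι → ℝ}
    (hK : IsObtuse K) (hC : C ∈ circuits K) (hD : D ∈ circuits K) (hCD : C ≠ D)
    (hx : x ∈ AddSubgroup.closure (C : Set (ι → ℝ)))
    (hy : y ∈ AddSubgroup.closure (D : Set (ι → ℝ))) : x ⬝ᵥ y = 0 := by
  have hdisj : Disjoint C D := hK.pairwiseDisjoint_circuits hC hD hCD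
  rw [mem_circuits] at hC hD
  classical
  exact dotProduct_eq_zero_of_mem_closure_of_mem_closure (fun u hu v hv =>
    hC.2.prop.dotProduct_eq_zero hK hC.1 hu
      (mem_sdiff.2 ⟨hD.1 hv, disjoint_right.1 hdisj hv⟩)) hx hy

lemma dotProduct_self_eq_sum_sq_div [Fintype κ] {f : κ → ι → ℝ}
    (horth : Pairwise fun i j => f i ⬝ᵥ f j = 0) (hne : ∀ i, f i ⬝ᵥ f i ≠ 0)
    (hcard : Fintype.card κ = Fintype.card ι) (y : ι → ℝ) :
    y ⬝ᵥ y = ∑ i, (y ⬝ᵥ f i) ^ 2 / (f i ⬝ᵥ f i) := by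
  classical
  have hli : LinearIndependent ℝ f :=
    LinearMap.linearIndependent_of_isOrthoᵢ (B := dotProductBilin ℝ ℝ)
      (fun i j hij => horth hij) hne
  have hspan : y ∈ Submodule.span ℝ (Set.range f) := by
    rw [hli.span_eq_top_of_card_eq_finrank' (by rw [Module.finrank_pi, hcard])]
    exact Submodule.mem_top
  obtain ⟨d, rfl⟩ := (Submodule.mem_span_range_iff_exists_fun ℝ).1 hspan
  have hcoord (j : κ) : (∑ i, d i • f i) ⬝ᵥ f j = d j * (f j ⬝ᵥ f j) := by
    rw [sum_dotProduct, Fintype.sum_eq_single j fun i hij => by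
      rw [smul_dotProduct, horth hij, smul_zero], smul_dotProduct, smul_eq_mul]
  rw [dotProduct_sum]
  refine sum_congr rfl fun j _ => ?_
  rw [dotProduct_smul, hcoord, smul_eq_mul, eq_div_iff (hne j)]
  ring

end Orthogonality

section Lattice

variable {a b : Fin 8 → ℝ}

/-- The vector with coordinates `z i / 2`. Integer vectors of doubled coordinates are used to
compute in the lattice `Λ`. -/
def half : (Fin 8 → ℤ) →+ (Fin 8 → ℝ) where
  toFun z i := z i / 2
  map_zero' := by ext; simp
  map_add' z y := by ext; simp [add_div]

lemma half_injective : Function.Injective half := fun z y h => by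
  ext i
  have hi : (z i : ℝ) / 2 = y i / 2 := congrFun h i
  exact_mod_cast (div_left_inj' two_ne_zero).1 hi

lemma half_dotProduct_half (z y : Fin 8 → ℤ) : half z ⬝ᵥ half y = (z ⬝ᵥ y : ℤ) / 4 := by
  simp only [half, dotProduct, AddMonoidHom.coe_mk, ZeroHom.coe_mk, Int.cast_sum, Int.cast_mul,
    sum_div]
  exact sum_congr rfl fun i _ => by ring

lemma half_dotProduct_half_eq_iff {z y : Fin 8 → ℤ} {n : ℤ} :
    half z ⬝ᵥ half y = n ↔ z ⬝ᵥ y = 4 * n := by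
  rw [half_dotProduct_half, div_eq_iff four_ne_zero, mul_comm]
  exact_mod_cast Iff.rfl

lemma inLambda_iff :
    inLambda a ↔ ∃ z, half z = a ∧ (∀ i, 2 ∣ z i - z 0) ∧ 4 ∣ ∑ i, z i := by
  have hsum (z : Fin 8 → ℤ) : (∃ n : ℤ, ∑ i, half z i = 2 * n) ↔ 4 ∣ ∑ i, z i := by
    have hhalf : ∑ i, half z i = (∑ i, z i : ℤ) / 2 := by
      simp only [half, AddMonoidHom.coe_mk, ZeroHom.coe_mk, Int.cast_sum, sum_div]
    refine exists_congr fun n => ?_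
    rw [hhalf, div_eq_iff two_ne_zero, mul_right_comm]
    norm_num
    exact_mod_cast Iff.rfl
  constructor
  · rintro ⟨h | h, hn⟩
    · choose z hz using h
      obtain rfl : half (fun i => 2 * z i) = a := by ext i; simp [half, hz]
      exact ⟨_, rfl, fun i => ⟨z i - z 0, by ring⟩, (hsum _).1 hn⟩
    · choose z hz using h
      obtain rfl : half (fun i => 2 * z i + 1) = a := by ext i; simp [half, hz, add_div]
      exact ⟨_, rfl, fun i => ⟨z i - z 0, by ring⟩, (hsum _).1 hn⟩
  · rintro ⟨z, rfl, hpar, h4⟩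
    refine ⟨?_, (hsum z).2 h4⟩
    choose y hy using hpar
    obtain ⟨m, hm | hm⟩ := Int.even_or_odd' (z 0)
    · refine Or.inl fun i => ⟨y i + m, ?_⟩
      have hi : z i = 2 * (y i + m) := by linarith [hy i]
      simp [half, hi]
    · refine Or.inr fun i => ⟨y i + m, ?_⟩
      have hi : z i = 2 * (y i + m) + 1 := by linarith [hy i]
      simp [half, hi, add_div]

/-- The lattice `Λ` as an additive subgroup of `ℝ^8`. -/
def lattice : AddSubgroup (Fin 8 → ℝ) where
  carrier := {a | inLambda a}
  zero_mem' := inLambda_iff.2 ⟨0, map_zero half, by simp, by simp⟩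
  add_mem' := by
    simp only [Set.mem_ofPred_eq, inLambda_iff]
    rintro _ _ ⟨z, rfl, hz, hz4⟩ ⟨y, rfl, hy, hy4⟩
    refine ⟨z + y, map_add half z y, fun i => ?_, ?_⟩
    · simpa only [Pi.add_apply, add_sub_add_comm] using dvd_add (hz i) (hy i)
    · simpa only [Pi.add_apply, sum_add_distrib] using dvd_add hz4 hy4
  neg_mem' := by
    simp only [Set.mem_ofPred_eq, inLambda_iff]
    rintro _ ⟨z, rfl, hz, hz4⟩
    refine ⟨-z, map_neg half z, fun i => ?_, ?_⟩
    · simpa only [Pi.neg_apply, neg_sub_neg, neg_sub] using (dvd_neg.2 (hz i))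
    · simpa only [Pi.neg_apply, sum_neg_distrib] using (dvd_neg.2 hz4)

lemma mem_lattice : a ∈ lattice ↔ inLambda a := Iff.rfl

lemma exists_int_eq_dotProduct (ha : a ∈ lattice) (hb : b ∈ lattice) :
    ∃ n : ℤ, a ⬝ᵥ b = n := by
  obtain ⟨z, rfl, hz, hz4⟩ := inLambda_iff.1 ha
  obtain ⟨y, rfl, hy, hy4⟩ := inLambda_iff.1 hb
  have hzy : z ⬝ᵥ y = ∑ i, (z i - z 0) * (y i - y 0) + z 0 * ∑ i, y i + y 0 * ∑ i, z i
      - 4 * (2 * (z 0 * y 0)) := by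
    simp only [dotProduct, Fin.sum_univ_eight]
    ring
  have hdvd : 4 ∣ z ⬝ᵥ y := by
    rw [hzy]
    exact dvd_sub (dvd_add (dvd_add (dvd_sum fun i _ => mul_dvd_mul (hz i) (hy i))
      (hy4.mul_left _)) (hz4.mul_left _)) (dvd_mul_right _ _)
  obtain ⟨n, hn⟩ := hdvd
  exact ⟨n, half_dotProduct_half_eq_iff.2 hn⟩

lemma isRoot_iff_mem_lattice : isRoot a ↔ a ∈ lattice ∧ a ⬝ᵥ a = 2 := Iff.rfl

end Lattice

section WeylGroup

variable {a b : Fin 8 → ℝ} {w : (Fin 8 → ℝ) ≃ₗ[ℝ] (Fin 8 → ℝ)} {K : Finset (Fin 8 → ℝ)}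

/-- The Weyl group `W` as a subgroup of the linear automorphisms of `ℝ^8`. -/
def weylGroup : Subgroup ((Fin 8 → ℝ) ≃ₗ[ℝ] (Fin 8 → ℝ)) where
  carrier := {w | IsWeyl w}
  one_mem' := ⟨fun _ _ => rfl, Set.image_id _⟩
  mul_mem' := fun {w u} hw hu => ⟨fun a b => (hw.1 _ _).trans (hu.1 a b),
    (Set.image_comp w u _).trans (by rw [hu.2, hw.2])⟩
  inv_mem' := fun {w} hw => ⟨fun a b => by
    rw [← hw.1, ← LinearEquiv.mul_apply, ← LinearEquiv.mul_apply, mul_inv_cancel]; rfl, by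
    conv_lhs => rw [← hw.2]
    exact w.toEquiv.symm_image_image _⟩

lemma smul_dotProduct_smul_of_mem (hw : w ∈ weylGroup) (a b : Fin 8 → ℝ) :
    (w • a) ⬝ᵥ (w • b) = a ⬝ᵥ b :=
  hw.1 a b

lemma isRoot_smul_iff (hw : w ∈ weylGroup) : isRoot (w • a) ↔ isRoot a := by
  have himage : w a ∈ ⇑w '' {b | isRoot b} ↔ isRoot a := w.injective.mem_set_image
  rwa [hw.2] at himage

lemma isClique_smul_iff {c : Set ℝ} (hw : w ∈ weylGroup) :
    IsClique c (w • K) ↔ IsClique c K := by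
  have hdot (a b : Fin 8 → ℝ) : dot (w • a) (w • b) = dot a b := hw.1 a b
  simp only [IsClique, mem_smul_finset, forall_exists_index, and_imp, forall_apply_eq_imp_iff₂,
    isRoot_smul_iff hw, hdot, (MulAction.injective w).ne_iff]

/-- The reflection in the hyperplane orthogonal to a root. -/
def rootReflection (ha : isRoot a) : (Fin 8 → ℝ) ≃ₗ[ℝ] (Fin 8 → ℝ) :=
  Module.reflection (f := dotProductBilin ℝ ℝ a) ha.2

lemma rootReflection_smul (ha : isRoot a) (b : Fin 8 → ℝ) :
    rootReflection ha • b = b - (a ⬝ᵥ b) • a :=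
  Module.reflection_apply (f := dotProductBilin ℝ ℝ a) b ha.2

lemma rootReflection_mem_weylGroup (ha : isRoot a) : rootReflection ha ∈ weylGroup := by
  have hdot (b c : Fin 8 → ℝ) : (rootReflection ha • b) ⬝ᵥ (rootReflection ha • c) = b ⬝ᵥ c := by
    have haa : a ⬝ᵥ a = 2 := ha.2
    simp only [rootReflection_smul, sub_dotProduct, dotProduct_sub, smul_dotProduct,
      dotProduct_smul, smul_eq_mul, haa, dotProduct_comm b a]
    ring
  have hroot {b : Fin 8 → ℝ} (hb : isRoot b) : isRoot (rootReflection ha • b) := by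
    refine ⟨?_, (hdot b b).trans hb.2⟩
    obtain ⟨n, hn⟩ := exists_int_eq_dotProduct ha.1 hb.1
    rw [rootReflection_smul, hn, Int.cast_smul_eq_zsmul]
    exact lattice.sub_mem hb.1 (lattice.zsmul_mem ha.1 n)
  refine ⟨hdot, Set.Subset.antisymm (Set.image_subset_iff.2 fun b hb => hroot hb) fun b hb => ?_⟩
  exact ⟨_, hroot hb, Module.involutive_reflection ha.2 b⟩

end WeylGroup

section RootEnumeration

/-- The integer vectors of length `n` and squared norm `b` with all entries in `S`. The filter
prunes the enumeration. -/
def vecsOfNormSq (S : List ℤ) : (n : ℕ) → ℤ → List (Fin n → ℤ)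
  | 0, b => if b = 0 then [Fin.elim0] else []
  | n + 1, b => (S.filter (· ^ 2 ≤ b)).flatMap fun x =>
      (vecsOfNormSq S n (b - x ^ 2)).map (Matrix.vecCons x)

lemma mem_vecsOfNormSq {S : List ℤ} {n : ℕ} {b : ℤ} {z : Fin n → ℤ} :
    z ∈ vecsOfNormSq S n b ↔ (∀ i, z i ∈ S) ∧ z ⬝ᵥ z = b := by
  induction n generalizing b with
  | zero => simp [vecsOfNormSq, Subsingleton.elim z Fin.elim0, eq_comm]
  | succ n ih =>
    induction z using Fin.consCases with | _ x y =>
    have hcons : (Fin.cons x y : Fin (n + 1) → ℤ) ⬝ᵥ Fin.cons x y = x ^ 2 + y ⬝ᵥ y := by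
      simp [dotProduct, Fin.sum_univ_succ, sq]
    have hnorm : 0 ≤ y ⬝ᵥ y := sum_nonneg fun i _ => mul_self_nonneg _
    simp only [vecsOfNormSq, List.mem_flatMap, List.mem_filter, List.mem_map, decide_eq_true_eq,
      Matrix.vecCons, Fin.cons_inj, ih, Fin.forall_fin_succ, Fin.cons_zero, Fin.cons_succ, hcons]
    constructor
    · rintro ⟨x, ⟨hx, -⟩, y, ⟨hy, hyy⟩, rfl, rfl⟩
      exact ⟨⟨hx, hy⟩, by rw [hyy]; ring⟩
    · rintro ⟨⟨hx, hy⟩, rfl⟩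
      exact ⟨x, ⟨hx, by linarith⟩, y, ⟨hy, by ring⟩, rfl, rfl⟩

lemma nodup_vecsOfNormSq {S : List ℤ} (hS : S.Nodup) (n : ℕ) (b : ℤ) :
    (vecsOfNormSq S n b).Nodup := by
  induction n generalizing b with
  | zero => unfold vecsOfNormSq; split_ifs <;> simp
  | succ n ih =>
    refine List.nodup_flatMap.2
      ⟨fun x _ => (ih _).map (Fin.cons_right_injective (α := fun _ => ℤ) x), ?_⟩
    refine (hS.filter _).imp fun {x y} hxy => ?_
    simp only [Function.onFun, List.disjoint_left, List.mem_map, not_exists, not_and,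
      forall_exists_index, and_imp, forall_apply_eq_imp_iff₂, Matrix.vecCons, Fin.cons_inj]
    exact fun _ _ _ _ h _ => hxy h.symm

/-- The roots in doubled coordinates. -/
def rootVecs : List (Fin 8 → ℤ) :=
  (vecsOfNormSq [2, -2, 0] 8 8 ++ vecsOfNormSq [1, -1] 8 8).filter (4 ∣ ∑ i, · i)

lemma nodup_rootVecs : rootVecs.Nodup := by
  refine ((nodup_vecsOfNormSq (by decide) 8 8).append (nodup_vecsOfNormSq (by decide) 8 8)
    fun z hz hz' => ?_).filter _
  have h0 := (mem_vecsOfNormSq.1 hz).1 0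
  have h0' := (mem_vecsOfNormSq.1 hz').1 0
  simp only [List.mem_cons, List.not_mem_nil, or_false] at h0 h0'
  lia

lemma isRoot_half_iff {z : Fin 8 → ℤ} : isRoot (half z) ↔ z ∈ rootVecs := by
  have hnorm : half z ⬝ᵥ half z = 2 ↔ z ⬝ᵥ z = 8 := half_dotProduct_half_eq_iff (n := 2)
  have hlattice : half z ∈ lattice ↔ (∀ i, 2 ∣ z i - z 0) ∧ 4 ∣ ∑ i, z i := by
    simp only [mem_lattice, inLambda_iff, half_injective.eq_iff, exists_eq_left]
  simp only [isRoot_iff_mem_lattice, hnorm, hlattice, rootVecs, List.mem_filter, List.mem_append,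
    mem_vecsOfNormSq, decide_eq_true_eq, List.mem_cons, List.not_mem_nil, or_false]
  constructor
  · rintro ⟨⟨hpar, h4⟩, h8⟩
    have hsq (i : Fin 8) : z i * z i ≤ 8 :=
      h8 ▸ single_le_sum (f := fun i => z i * z i) (fun i _ => mul_self_nonneg _) (mem_univ i)
    have hle (i : Fin 8) : -2 ≤ z i ∧ z i ≤ 2 :=
      ⟨by nlinarith [hsq i], by nlinarith [hsq i]⟩
    obtain ⟨m, hm | hm⟩ := Int.even_or_odd' (z 0)
    · exact ⟨Or.inl ⟨fun i => by have := hpar i; have := hle i; lia, h8⟩, h4⟩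
    · exact ⟨Or.inr ⟨fun i => by have := hpar i; have := hle i; lia, h8⟩, h4⟩
  · rintro ⟨⟨hz, h8⟩ | ⟨hz, h8⟩, h4⟩ <;>
      exact ⟨⟨fun i => by have := hz i; have := hz 0; lia, h4⟩, h8⟩

lemma exists_half_eq {a : Fin 8 → ℝ} (ha : isRoot a) : ∃ z ∈ rootVecs, half z = a := by
  obtain ⟨z, rfl, -⟩ := inLambda_iff.1 ha.1
  exact ⟨z, isRoot_half_iff.1 ha, rfl⟩

end RootEnumeration

section Frame

/-- Two pairs of roots, in doubled coordinates, spanning two orthogonal root systems of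
type `A₂`. -/
def frame : Fin 4 → Fin 8 → ℤ :=
  ![![2, -2, 0, 0, 0, 0, 0, 0], ![0, 2, -2, 0, 0, 0, 0, 0],
    ![0, 0, 0, 2, -2, 0, 0, 0], ![0, 0, 0, 0, 2, -2, 0, 0]]

/-- The roots, in doubled coordinates, that have the same products with the earlier members of the
frame as `frame k`. -/
def frameClass (k : Fin 4) : List (Fin 8 → ℤ) :=
  rootVecs.filter fun z => ∀ i < k, z ⬝ᵥ frame i = frame k ⬝ᵥ frame i

lemma half_mem_frameClass_iff {k : Fin 4} {z : Fin 8 → ℤ} :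
    z ∈ frameClass k ↔ isRoot (half z) ∧
      ∀ i < k, half z ⬝ᵥ half (frame i) = half (frame k) ⬝ᵥ half (frame i) := by
  simp only [frameClass, List.mem_filter, decide_eq_true_eq, isRoot_half_iff,
    half_dotProduct_half, div_left_inj' (four_ne_zero (α := ℝ)), Int.cast_inj]

lemma length_frameClass (k : Fin 4) : (frameClass k).length = ![240, 56, 72, 20] k := by
  decide +kernel +revert

lemma exists_closer_to_frame {k : Fin 4} :
    ∀ z ∈ frameClass k, z ≠ frame k → ∃ y ∈ frameClass k,
      z ⬝ᵥ y = 4 ∧ z ⬝ᵥ frame k < y ⬝ᵥ frame k ∧ y ⬝ᵥ frame k ≤ 8 := by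
  decide +kernel +revert

-- The reflection in the root `a - b`.
lemma exists_weylGroup_smul_eq {a b : Fin 8 → ℝ} (ha : isRoot a) (hb : isRoot b)
    (hab : a ⬝ᵥ b = 1) :
    ∃ w ∈ weylGroup, w • a = b ∧ ∀ c, c ⬝ᵥ a = c ⬝ᵥ b → w • c = c := by
  have haa : a ⬝ᵥ a = 2 := ha.2
  have hbb : b ⬝ᵥ b = 2 := hb.2
  have hroot : isRoot (a - b) := by
    refine isRoot_iff_mem_lattice.2 ⟨lattice.sub_mem ha.1 hb.1, ?_⟩
    rw [sub_dotProduct, dotProduct_sub, dotProduct_sub, dotProduct_comm b a, haa, hbb, hab]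
    norm_num
  refine ⟨rootReflection hroot, rootReflection_mem_weylGroup hroot, ?_, fun c hc => ?_⟩
  · have hone : (a - b) ⬝ᵥ a = 1 := by
      rw [sub_dotProduct, dotProduct_comm b a, haa, hab]
      norm_num
    rw [rootReflection_smul, hone, one_smul, sub_sub_cancel]
  · rw [rootReflection_smul, dotProduct_comm, dotProduct_sub, hc, sub_self, zero_smul, sub_zero]

lemma exists_weylGroup_smul_half_eq_frame {k : Fin 4} {z : Fin 8 → ℤ} (hz : z ∈ frameClass k) :
    ∃ w ∈ weylGroup, (∀ i < k, w • half (frame i) = half (frame i)) ∧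
      w • half z = half (frame k) := by
  induction hn : (8 - z ⬝ᵥ frame k).toNat using Nat.strong_induction_on generalizing z with
  | _ n ih =>
    by_cases hzk : z = frame k
    · exact ⟨1, weylGroup.one_mem, fun i _ => one_smul _ _, by rw [hzk, one_smul]⟩
    obtain ⟨y, hy, hzy, hlt, hle⟩ := exists_closer_to_frame z hz hzk
    obtain ⟨hzroot, hzdot⟩ := half_mem_frameClass_iff.1 hz
    obtain ⟨hyroot, hydot⟩ := half_mem_frameClass_iff.1 hy
    obtain ⟨u, hu, huz, hufix⟩ := exists_weylGroup_smul_eq hzroot hyroot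
      (by simpa only [Int.cast_one] using (half_dotProduct_half_eq_iff (n := 1)).2 hzy)
    obtain ⟨w, hw, hwfix, hwy⟩ := ih _ (by lia) hy rfl
    refine ⟨w * u, weylGroup.mul_mem hw hu, fun i hi => ?_, by rw [mul_smul, huz, hwy]⟩
    rw [mul_smul, hufix, hwfix i hi]
    rw [dotProduct_comm, hzdot i hi, ← hydot i hi, dotProduct_comm]

lemma exists_weylGroup_forall_smul_eq_frame (a : Fin 4 → Fin 8 → ℝ) (n : ℕ)
    (ha : ∀ i : Fin 4, i < n → isRoot (a i))
    (hdot : ∀ i j : Fin 4, i < n → j < i → a i ⬝ᵥ a j = half (frame i) ⬝ᵥ half (frame j)) :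
    ∃ w ∈ weylGroup, ∀ i : Fin 4, i < n → w • a i = half (frame i) := by
  induction n with
  | zero => exact ⟨1, weylGroup.one_mem, fun i hi => absurd hi i.val.not_lt_zero⟩
  | succ n ih =>
    obtain ⟨w, hw, hwa⟩ := ih (fun i hi => ha i (hi.trans n.lt_succ_self))
      fun i j hi => hdot i j (hi.trans n.lt_succ_self)
    by_cases hn : n < 4
    · let k : Fin 4 := ⟨n, hn⟩
      have hk : isRoot (w • a k) := (isRoot_smul_iff hw).2 (ha k n.lt_succ_self)
      obtain ⟨z, -, hz⟩ := exists_half_eq hk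
      have hzk : z ∈ frameClass k := half_mem_frameClass_iff.2 ⟨hz ▸ hk, fun i hi => by
        have hki := smul_dotProduct_smul_of_mem hw (a k) (a i)
        rwa [hwa i hi, hdot k i n.lt_succ_self hi, ← hz] at hki⟩
      obtain ⟨u, hu, hufix, huz⟩ := exists_weylGroup_smul_half_eq_frame hzk
      refine ⟨u * w, weylGroup.mul_mem hu hw, fun i hi => ?_⟩
      rw [mul_smul]
      obtain hi | rfl : i < k ∨ i = k := (Nat.lt_succ_iff_lt_or_eq.1 hi).imp id Fin.ext
      · rw [hwa i hi, hufix i hi]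
      · rw [← hz, huz]
    · exact ⟨w, hw, fun i _ => hwa i (by lia)⟩

end Frame

section ElevenCliques

variable {K C D F : Finset (Fin 8 → ℝ)} {a b : Fin 8 → ℝ}

lemma IsClique.isSimplyLaced (hK : IsClique {-1, 0} K) : IsSimplyLaced K :=
  ⟨fun v hv => (hK.1 v hv).2, hK.2⟩

lemma IsClique.mono {c : Set ℝ} (hK : IsClique c K) (h : C ⊆ K) : IsClique c C :=
  ⟨fun e he => hK.1 e (h he), fun e he f hf => hK.2 e (h he) f (h hf)⟩

lemma exists_isRoot_dotProduct_eq_one (ha : isRoot a) (hb : isRoot b) (hab : a ⬝ᵥ b = -1) :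
    ∃ y, isRoot y ∧ y ⬝ᵥ a = 1 ∧ y ⬝ᵥ b = 0 := by
  have hframe : half (frame 0) ⬝ᵥ half (frame 1) = (-1 : ℤ) :=
    half_dotProduct_half_eq_iff.2 (by decide)
  obtain ⟨w, hw, hwab⟩ := exists_weylGroup_forall_smul_eq_frame ![a, b, 0, 0] 2
    (fun i hi => by
      obtain rfl | rfl : i = 0 ∨ i = 1 := by lia
      exacts [ha, hb])
    (fun i j hi hj => by
      obtain ⟨rfl, rfl⟩ : i = 1 ∧ j = 0 := by lia
      rw [dotProduct_comm, dotProduct_comm (half (frame 1)), hframe, Int.cast_neg, Int.cast_one]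
      exact hab)
  have hwa : w • a = half (frame 0) := hwab 0 (by decide)
  have hwb : w • b = half (frame 1) := hwab 1 (by decide)
  have hroot : isRoot (half ![2, 0, 0, 2, 0, 0, 0, 0]) := isRoot_half_iff.2 (by decide +kernel)
  refine ⟨w⁻¹ • half ![2, 0, 0, 2, 0, 0, 0, 0],
    (isRoot_smul_iff (weylGroup.inv_mem hw)).2 hroot, ?_, ?_⟩
  · rw [← smul_dotProduct_smul_of_mem hw, smul_inv_smul, hwa]
    exact_mod_cast (half_dotProduct_half_eq_iff (n := 1)).2 (by decide)
  · rw [← smul_dotProduct_smul_of_mem hw, smul_inv_smul, hwb]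
    exact_mod_cast (half_dotProduct_half_eq_iff (n := 0)).2 (by decide)

-- Otherwise Parseval's identity for the root `y` with `y ⬝ᵥ a = 1` and `y ⬝ᵥ b = 0`, in the
-- orthogonal basis `a`, `a + 2 • b`, `f i`, reads `2 = 1 / 2 + 1 / 6 + n / 4` with an integer `n`.
lemma exists_dotProduct_ne_zero {κ : Type*} [Fintype κ] [DecidableEq κ] {f : κ → Fin 8 → ℝ}
    (ha : isRoot a) (hb : isRoot b) (hab : a ⬝ᵥ b = -1) (hκ : Fintype.card κ = 6)
    (hf : ∀ i, f i ∈ lattice) (hff : ∀ i j, f i ⬝ᵥ f j = if i = j then 4 else 0) :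
    ∃ i, a ⬝ᵥ f i ≠ 0 ∨ b ⬝ᵥ f i ≠ 0 := by
  by_contra! horth
  obtain ⟨y, hy, hya, hyb⟩ := exists_isRoot_dotProduct_eq_one ha hb hab
  have haa : a ⬝ᵥ a = 2 := ha.2
  have hbb : b ⬝ᵥ b = 2 := hb.2
  have hyy : y ⬝ᵥ y = 2 := hy.2
  have hba : b ⬝ᵥ a = -1 := (dotProduct_comm b a).trans hab
  let g : Fin 2 ⊕ κ → Fin 8 → ℝ := Sum.elim ![a, a + (2 : ℝ) • b] f
  have hgorth : Pairwise fun i j => g i ⬝ᵥ g j = 0 := by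
    have hfa (i : κ) : f i ⬝ᵥ a = 0 := (dotProduct_comm _ _).trans (horth i).1
    have hfb (i : κ) : f i ⬝ᵥ b = 0 := (dotProduct_comm _ _).trans (horth i).2
    simp +contextual [g, Pairwise, Fin.forall_fin_two, horth, hfa, hfb, hff, haa, hba, hab]
  have hgnorm (i : Fin 2 ⊕ κ) : g i ⬝ᵥ g i = Sum.elim ![2, 6] (fun _ => 4) i := by
    obtain i | i := i
    · fin_cases i <;> simp [g, -dotProduct_self_eq_zero, haa, hbb, hba, hab]
      norm_num
    · simp [g, hff]
  have hparseval := dotProduct_self_eq_sum_sq_div hgorth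
    (by simp [hgnorm, Sum.forall, Fin.forall_fin_two, -dotProduct_self_eq_zero])
    (by simp [hκ]) y
  choose n hn using fun i => exists_int_eq_dotProduct hy.1 (hf i)
  simp only [hyy, hgnorm, Fintype.sum_sum_type, Sum.elim_inl, Sum.elim_inr, Fin.sum_univ_two, g,
    Matrix.cons_val_zero, Matrix.cons_val_one, dotProduct_add, dotProduct_smul, hya, hyb, hn,
    smul_eq_mul, mul_zero, add_zero, ← sum_div] at hparseval
  have hint : (16 : ℝ) = 3 * ∑ i, (n i : ℝ) ^ 2 := by linarith
  norm_cast at hint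
  lia

lemma IsClique.closure_le_lattice {c : Set ℝ} (hK : IsClique c K) :
    AddSubgroup.closure (K : Set (Fin 8 → ℝ)) ≤ lattice :=
  (AddSubgroup.closure_le _).2 fun v hv => (hK.1 v hv).1

lemma IsClique.false_of_card_circuits_eq (hK : IsClique {-1, 0} K) (hC : C ∈ circuits K)
    (hD : D ∈ circuits K) (hF : F ∈ circuits K) (hCD : C ≠ D) (hCF : C ≠ F) (hDF : D ≠ F)
    (hC3 : #C = 3) (hD4 : #D = 4) (hF4 : #F = 4) : False := by
  have horth {C D x y} := hK.isSimplyLaced.isObtuse.dotProduct_eq_zero_of_mem_closure_circuit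
    (C := C) (D := D) (x := x) (y := y)
  have hcircuit {C} (hC : C ∈ circuits K) := mem_circuits.1 hC
  have hlaced {C} (hC : C ∈ circuits K) := hK.isSimplyLaced.mono (hcircuit hC).1
  have hlattice {C} (hC : C ∈ circuits K) := (hK.mono (hcircuit hC).1).closure_le_lattice
  obtain ⟨a, b, hab, hCab⟩ := (hlaced hC).exists_eq_triangle (hcircuit hC).2.prop hC3
  have ha : a ∈ C := by simp [hCab]
  have hb : b ∈ C := by simp [hCab]
  obtain ⟨f, hfD, hff⟩ := (hlaced hD).exists_orthogonal_triple (hcircuit hD).2.prop hD4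
  obtain ⟨g, hgF, hgg⟩ := (hlaced hF).exists_orthogonal_triple (hcircuit hF).2.prop hF4
  have hfg (i j : Fin 3) : f i ⬝ᵥ g j = 0 := horth hD hF hDF (hfD i) (hgF j)
  obtain ⟨i, hi⟩ := exists_dotProduct_ne_zero (f := Sum.elim f g) (hK.1 a ((hcircuit hC).1 ha))
    (hK.1 b ((hcircuit hC).1 hb)) hab (by simp)
    (Sum.forall.2 ⟨fun i => hlattice hD (hfD i), fun i => hlattice hF (hgF i)⟩)
    (by simp [Sum.forall, hff, hgg, hfg, dotProduct_comm (g _) (f _)])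
  have hmem {x} (hx : x ∈ C) := AddSubgroup.subset_closure (mem_coe.2 hx)
  obtain i | i := i
  · exact hi.elim (· (horth hC hD hCD (hmem ha) (hfD i))) (· (horth hC hD hCD (hmem hb) (hfD i)))
  · exact hi.elim (· (horth hC hF hCF (hmem ha) (hgF i))) (· (horth hC hF hCF (hmem hb) (hgF i)))

-- There are at least three circuits, with at least three roots each and at most eleven in total, so
-- their sizes are `3, 3, x` or `3, 4, 4`.
lemma IsClique.exists_card_circuits_eq_three (hK : IsClique {-1, 0} K) (hcard : #K = 11) :
    ∃ C ∈ circuits K, ∃ D ∈ circuits K, C ≠ D ∧ #C = 3 ∧ #D = 3 := by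
  have hobtuse := hK.isSimplyLaced.isObtuse
  have hcircuits : 2 < #(circuits K) := by
    have := hobtuse.card_le_card_add_card_circuits
    rw [Fintype.card_fin] at this
    lia
  obtain ⟨C, D, F, hC, hD, hF, hCD, hCF, hDF⟩ := two_lt_card_iff.1 hcircuits
  have hsum : #C + (#D + #F) ≤ 11 := by
    classical
    calc #C + (#D + #F) = ∑ B ∈ {C, D, F}, #B := by
          rw [sum_insert (by simp [hCD, hCF]), sum_pair hDF]
      _ ≤ ∑ B ∈ circuits K, #B := sum_le_sum_of_subset (by
          simp only [insert_subset_iff, singleton_subset_iff, hC, hD, hF, and_self])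
      _ ≤ 11 := hcard ▸ hobtuse.sum_card_circuits_le
  have hthree {B} (hB : B ∈ circuits K) : 3 ≤ #B :=
    (hK.isSimplyLaced.mono (mem_circuits.1 hB).1).three_le_card (mem_circuits.1 hB).2.prop
  by_contra! hne
  have h₁ := hne C hC D hD hCD
  have h₂ := hne C hC F hF hCF
  have h₃ := hne D hD F hF hDF
  have hsizes : (#C = 3 ∧ #D = 4 ∧ #F = 4) ∨ (#D = 3 ∧ #C = 4 ∧ #F = 4) ∨
      (#F = 3 ∧ #C = 4 ∧ #D = 4) := by
    have := hthree hC
    have := hthree hD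
    have := hthree hF
    lia
  obtain ⟨h, h', h''⟩ | ⟨h, h', h''⟩ | ⟨h, h', h''⟩ := hsizes
  · exact hK.false_of_card_circuits_eq hC hD hF hCD hCF hDF h h' h''
  · exact hK.false_of_card_circuits_eq hD hC hF hCD.symm hDF hCF h h' h''
  · exact hK.false_of_card_circuits_eq hF hC hD hCF.symm hDF.symm hCD h h' h''

end ElevenCliques

section StandardCliques

variable {K : Finset (Fin 8 → ℝ)} {σ : Type*} [DecidableEq σ]

/-- The Gram matrix of the vertices of orthogonal triangles of roots. Triangles, of affine type
`Ã₂`, are indexed by `σ`, and their vertices by `Fin 3`. -/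
def gram (a b : σ × Fin 3) : ℤ :=
  if a.1 = b.1 then if a.2 = b.2 then 2 else -1 else 0

/-- Four mutually orthogonal triangles of roots in doubled coordinates. The first two contain the
frame. -/
def basicVec : Fin 2 ⊕ Fin 2 → Fin 3 → Fin 8 → ℤ :=
  Sum.elim
    ![![![2, -2, 0, 0, 0, 0, 0, 0], ![0, 2, -2, 0, 0, 0, 0, 0], ![-2, 0, 2, 0, 0, 0, 0, 0]],
      ![![0, 0, 0, 2, -2, 0, 0, 0], ![0, 0, 0, 0, 2, -2, 0, 0], ![0, 0, 0, -2, 0, 2, 0, 0]]]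
    ![![![0, 0, 0, 0, 0, 0, 2, 2], ![1, 1, 1, 1, 1, 1, -1, -1], ![-1, -1, -1, -1, -1, -1, -1, -1]],
      ![![0, 0, 0, 0, 0, 0, 2, -2], ![1, 1, 1, -1, -1, -1, -1, 1], ![-1, -1, -1, 1, 1, 1, -1, 1]]]

/-- The vertices, in doubled coordinates, of a clique of size twelve: the last two basic triangles
are multiplied by signs. -/
def stdVec (ε : Fin 2 → ℤˣ) (a : (Fin 2 ⊕ Fin 2) × Fin 3) : Fin 8 → ℤ :=
  Sum.elim (1 : Fin 2 → ℤˣ) ε a.1 • basicVec a.1 a.2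

/-- The standard clique with signs `ε`. -/
def stdClique (ε : Fin 2 → ℤˣ) : Finset (Fin 8 → ℝ) :=
  univ.image fun a => half (stdVec ε a)

lemma half_basicVec_dotProduct (s c t d) :
    half (basicVec s c) ⬝ᵥ half (basicVec t d) = (gram (s, c) (t, d) : ℤ) := by
  refine half_dotProduct_half_eq_iff.2 ?_
  decide +kernel +revert

lemma half_units_smul_dotProduct_half_units_smul (u v : ℤˣ) (z y : Fin 8 → ℤ) :
    half (u • z) ⬝ᵥ half (v • y) = ((u * v : ℤˣ) : ℤ) * (half z ⬝ᵥ half y) := by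
  rw [Units.smul_def, Units.smul_def, map_zsmul, map_zsmul, smul_dotProduct, dotProduct_smul,
    smul_smul, zsmul_eq_mul, Units.val_mul]

lemma half_stdVec_dotProduct (ε a b) :
    half (stdVec ε a) ⬝ᵥ half (stdVec ε b) = (gram a b : ℤ) := by
  rw [stdVec, stdVec, half_units_smul_dotProduct_half_units_smul, half_basicVec_dotProduct]
  by_cases hab : a.1 = b.1
  · rw [hab, Int.units_mul_self, Units.val_one, Int.cast_one, one_mul, ← hab,
      Prod.mk.eta, hab, Prod.mk.eta]
  · simp only [gram, hab, if_false, Int.cast_zero, mul_zero]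

lemma isRoot_half_basicVec (s c) : isRoot (half (basicVec s c)) := by
  refine isRoot_half_iff.2 ?_
  decide +kernel +revert

lemma isRoot_half_stdVec (ε a) : isRoot (half (stdVec ε a)) := by
  refine isRoot_iff_mem_lattice.2 ⟨?_, ?_⟩
  · rw [stdVec, Units.smul_def, map_zsmul]
    exact lattice.zsmul_mem (isRoot_half_basicVec a.1 a.2).1 _
  · rw [half_stdVec_dotProduct]
    simp [gram]

lemma gram_eq_two_iff {a b : σ × Fin 3} : gram a b = 2 ↔ a = b := by
  rw [gram, Prod.ext_iff]
  split_ifs <;> simp [*]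

lemma injective_of_dotProduct_eq_gram {v : σ × Fin 3 → Fin 8 → ℝ}
    (hv : ∀ a b, v a ⬝ᵥ v b = (gram a b : ℤ)) : Function.Injective v := fun a b hab => by
  have h2 : v a ⬝ᵥ v a = v a ⬝ᵥ v b := by rw [← hab]
  rw [hv, hv, Int.cast_inj, gram_eq_two_iff.2 rfl] at h2
  exact gram_eq_two_iff.1 h2.symm

lemma half_stdVec_mem (ε a) : half (stdVec ε a) ∈ stdClique ε := mem_image_of_mem _ (mem_univ a)

lemma card_stdClique (ε) : #(stdClique ε) = 12 :=
  card_image_of_injective _ (injective_of_dotProduct_eq_gram (half_stdVec_dotProduct ε))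

lemma isClique_stdClique (ε) : IsClique {-1, 0} (stdClique ε) := by
  refine ⟨forall_mem_image.2 fun a _ => isRoot_half_stdVec ε a,
    forall_mem_image.2 fun a _ => forall_mem_image.2 fun b _ hab => ?_⟩
  change half (stdVec ε a) ⬝ᵥ half (stdVec ε b) ∈ _
  rw [half_stdVec_dotProduct]
  have hne : gram a b ≠ 2 := mt gram_eq_two_iff.1 fun h => hab (h ▸ rfl)
  unfold gram at hne ⊢
  split_ifs at hne ⊢ <;> simp at hne ⊢

-- The orthogonal complement of `A₂ ⊕ A₂` in `E₈` is again `A₂ ⊕ A₂`.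
lemma exists_eq_units_smul_basicVec : ∀ z ∈ rootVecs,
    (∀ s c, basicVec (Sum.inl s) c ⬝ᵥ z = 0) →
      ∃ s c, ∃ u : ℤˣ, z = u • basicVec (Sum.inr s) c := by
  decide +kernel

lemma sum_half_basicVec (s) : ∑ c, half (basicVec s c) = 0 := by
  rw [← map_sum, show ∑ c, basicVec s c = 0 by decide +revert, map_zero]

lemma IsClique.eq_or_eq_units_smul_basicVec {x : Fin 8 → ℝ} (hK : IsClique {-1, 0} K)
    (hbasic : ∀ s c, half (basicVec (Sum.inl s) c) ∈ K) (hx : x ∈ K) :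
    (∃ s c, x = half (basicVec (Sum.inl s) c)) ∨
      ∃ s c, ∃ u : ℤˣ, x = half (u • basicVec (Sum.inr s) c) := by
  refine or_iff_not_imp_left.2 fun hne => ?_
  push Not at hne
  obtain ⟨z, hz, rfl⟩ := exists_half_eq (hK.1 x hx)
  obtain ⟨s, c, u, rfl⟩ := exists_eq_units_smul_basicVec z hz fun s c => by
    have horth := hK.isSimplyLaced.isObtuse.dotProduct_eq_zero_of_sum_eq_zero
      (sum_half_basicVec (Sum.inl s)) (hbasic s) hx (fun c => (hne s c).symm) c
    exact (half_dotProduct_half_eq_iff (n := 0)).1 (horth.trans Int.cast_zero.symm)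
  exact ⟨s, c, u, rfl⟩

-- A vertex of a triangle and the negative of a vertex have product `1` or `-2`.
lemma IsClique.units_eq_of_smul_basicVec_mem {s : Fin 2} {c d : Fin 3} {u v : ℤˣ}
    (hK : IsClique {-1, 0} K) (hu : half (u • basicVec (Sum.inr s) c) ∈ K)
    (hv : half (v • basicVec (Sum.inr s) d) ∈ K) : u = v := by
  by_contra huv
  have huv : u * v = -1 := (Int.units_eq_one_or _).resolve_left fun h =>
    huv (by rw [← mul_inv_eq_one, Int.units_inv_eq_self, h])
  have hdot : half (u • basicVec (Sum.inr s) c) ⬝ᵥ half (v • basicVec (Sum.inr s) d) =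
      -(if c = d then 2 else -1 : ℤ) := by
    rw [half_units_smul_dotProduct_half_units_smul, half_basicVec_dotProduct, huv]
    simp only [gram, if_true, Units.val_neg, Units.val_one, Int.cast_neg, Int.cast_one,
      neg_one_mul]
  have hmem : half (u • basicVec (Sum.inr s) c) ⬝ᵥ half (v • basicVec (Sum.inr s) d) = 2 ∨
      half (u • basicVec (Sum.inr s) c) ⬝ᵥ half (v • basicVec (Sum.inr s) d) = -1 ∨
      half (u • basicVec (Sum.inr s) c) ⬝ᵥ half (v • basicVec (Sum.inr s) d) = 0 := by
    by_cases heq : half (u • basicVec (Sum.inr s) c) = half (v • basicVec (Sum.inr s) d)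
    · exact Or.inl (heq ▸ (hK.1 _ hu).2)
    · exact Or.inr (hK.2 _ hu _ hv heq)
  rw [hdot] at hmem
  split_ifs at hmem <;> norm_num at hmem

lemma IsClique.exists_subset_stdClique (hK : IsClique {-1, 0} K)
    (hbasic : ∀ s c, half (basicVec (Sum.inl s) c) ∈ K) : ∃ ε, K ⊆ stdClique ε := by
  have hsign (s : Fin 2) :
      ∃ u : ℤˣ, ∀ c v, half (v • basicVec (Sum.inr s) c) ∈ K → v = u := by
    by_cases h : ∃ (u : ℤˣ) (c : Fin 3), half (u • basicVec (Sum.inr s) c) ∈ K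
    · obtain ⟨u, c, hu⟩ := h
      exact ⟨u, fun d v hv => hK.units_eq_of_smul_basicVec_mem hv hu⟩
    · push Not at h
      exact ⟨1, fun c v hv => absurd hv (h v c)⟩
  choose ε hε using hsign
  refine ⟨ε, fun x hx => ?_⟩
  obtain ⟨s, c, rfl⟩ | ⟨s, c, u, rfl⟩ := hK.eq_or_eq_units_smul_basicVec hbasic hx
  · simpa [stdVec] using half_stdVec_mem ε (Sum.inl s, c)
  · rw [hε s c u hx]
    exact half_stdVec_mem ε (Sum.inr s, c)

lemma exists_sub_smul_basicVec_eq_neg :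
    ∀ s c, ∃ d, basicVec s c - gram (s, 0) (s, c) • basicVec s 0 = -basicVec s d := by
  decide

-- The reflection in a vertex of a triangle maps the triangle to its negative.
lemma exists_weylGroup_smul_stdClique_subset (ε : Fin 2 → ℤˣ) (s : Fin 2) :
    ∃ w ∈ weylGroup, w • stdClique ε ⊆ stdClique (Function.update ε s (-ε s)) := by
  have hp := isRoot_half_stdVec ε (Sum.inr s, 0)
  refine ⟨rootReflection hp, rootReflection_mem_weylGroup hp, ?_⟩
  simp only [subset_iff, mem_smul_finset, forall_exists_index, and_imp, forall_apply_eq_imp_iff₂,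
    stdClique, forall_mem_image]
  rintro ⟨t, c⟩ -
  have hreflect : rootReflection hp • half (stdVec ε (t, c)) =
      half (stdVec ε (t, c) - gram (Sum.inr s, 0) (t, c) • stdVec ε (Sum.inr s, 0)) := by
    rw [rootReflection_smul, half_stdVec_dotProduct, Int.cast_smul_eq_zsmul, map_sub, map_zsmul]
  rw [hreflect]
  by_cases hts : t = Sum.inr s
  · subst hts
    obtain ⟨d, hd⟩ := exists_sub_smul_basicVec_eq_neg (Sum.inr s) c
    refine mem_image.2 ⟨(Sum.inr s, d), mem_univ _, congrArg half ?_⟩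
    simp only [stdVec, Sum.elim_inr, Function.update_self]
    rw [smul_comm, ← smul_sub, hd, smul_neg, Units.neg_smul]
  · refine mem_image.2 ⟨(t, c), mem_univ _, congrArg half ?_⟩
    simp only [gram, Ne.symm hts, if_false, zero_smul, sub_zero, stdVec]
    obtain t | t := t
    · rfl
    · rw [Sum.elim_inr, Sum.elim_inr, Function.update_of_ne (mt (congrArg Sum.inr) hts)]

lemma exists_weylGroup_smul_stdClique_subset_stdClique_one (ε) :
    ∃ w ∈ weylGroup, w • stdClique ε ⊆ stdClique 1 := by
  have hflip (ε : Fin 2 → ℤˣ) (s : Fin 2) :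
      ∃ w ∈ weylGroup, w • stdClique ε ⊆ stdClique (Function.update ε s 1) := by
    obtain h | h := Int.units_eq_one_or (ε s)
    · exact ⟨1, weylGroup.one_mem, by rw [one_smul, ← h, Function.update_eq_self]⟩
    · simpa only [h, neg_neg] using exists_weylGroup_smul_stdClique_subset ε s
  obtain ⟨w, hw, hwε⟩ := hflip ε 0
  obtain ⟨u, hu, huε⟩ := hflip (Function.update ε 0 1) 1
  refine ⟨u * w, weylGroup.mul_mem hu hw, ?_⟩
  rw [mul_smul]
  convert (smul_finset_subset_smul_finset hwε).trans huε using 2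
  ext s
  fin_cases s <;> simp

/-- The index of the frame vectors among the basic vectors. -/
def frameIndex : Fin 4 → (Fin 2 ⊕ Fin 2) × Fin 3 :=
  ![(Sum.inl 0, 0), (Sum.inl 0, 1), (Sum.inl 1, 0), (Sum.inl 1, 1)]

lemma stdVec_frameIndex (ε i) : stdVec ε (frameIndex i) = frame i := by
  fin_cases i <;> exact one_smul _ _

lemma half_frame_dotProduct (i j) :
    half (frame i) ⬝ᵥ half (frame j) = (gram (frameIndex i) (frameIndex j) : ℤ) := by
  rw [← stdVec_frameIndex 1, ← stdVec_frameIndex 1, half_stdVec_dotProduct]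

lemma half_basicVec_mem_smul {w : (Fin 8 → ℝ) ≃ₗ[ℝ] (Fin 8 → ℝ)} {s : Fin 2 ⊕ Fin 2}
    {a b : Fin 8 → ℝ} (ha : w • a = half (basicVec s 0)) (hb : w • b = half (basicVec s 1))
    (habK : a ∈ K ∧ b ∈ K ∧ -a - b ∈ K) (c : Fin 3) : half (basicVec s c) ∈ w • K := by
  have hsum := sum_half_basicVec s
  rw [Fin.sum_univ_three, add_comm] at hsum
  have hthird : w • (-a - b) = half (basicVec s 2) := by
    rw [smul_sub, smul_neg, ha, hb, eq_neg_of_add_eq_zero_left hsum, neg_add']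
  fin_cases c
  exacts [mem_smul_finset.2 ⟨a, habK.1, ha⟩, mem_smul_finset.2 ⟨b, habK.2.1, hb⟩,
    mem_smul_finset.2 ⟨_, habK.2.2, hthird⟩]

lemma IsClique.exists_weylGroup_half_basicVec_mem (hK : IsClique {-1, 0} K) (hcard : #K = 11) :
    ∃ w ∈ weylGroup, ∀ s c, half (basicVec (Sum.inl s) c) ∈ w • K := by
  obtain ⟨C, hC, D, hD, hCD, hC3, hD3⟩ := hK.exists_card_circuits_eq_three hcard
  have horth {x y} (hx : x ∈ C) (hy : y ∈ D) : y ⬝ᵥ x = 0 := by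
    rw [dotProduct_comm]
    exact hK.isSimplyLaced.isObtuse.dotProduct_eq_zero_of_mem_closure_circuit hC hD hCD
      (AddSubgroup.subset_closure hx) (AddSubgroup.subset_closure hy)
  rw [mem_circuits] at hC hD
  obtain ⟨a, b, hab, rfl⟩ :=
    (hK.isSimplyLaced.mono hC.1).exists_eq_triangle hC.2.prop hC3
  obtain ⟨c, d, hcd, rfl⟩ :=
    (hK.isSimplyLaced.mono hD.1).exists_eq_triangle hD.2.prop hD3
  obtain ⟨hCK, -⟩ := hC
  obtain ⟨hDK, -⟩ := hD
  simp only [insert_subset_iff, singleton_subset_iff] at hCK hDK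
  obtain ⟨w, hw, hwK⟩ := exists_weylGroup_forall_smul_eq_frame ![a, b, c, d] 4
    (fun i _ => by
      fin_cases i
      exacts [hK.1 a hCK.1, hK.1 b hCK.2.1, hK.1 c hDK.1, hK.1 d hDK.2.1])
    (fun i j _ hji => by
      rw [half_frame_dotProduct]
      fin_cases i <;> fin_cases j <;> first
        | exact absurd hji (by decide)
        | simp [gram, frameIndex, dotProduct_comm b a, dotProduct_comm d c, hab, hcd, horth])
  refine ⟨w, hw, fun s => ?_⟩
  fin_cases s
  exacts [half_basicVec_mem_smul (hwK 0 (by decide)) (hwK 1 (by decide)) hCK,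
    half_basicVec_mem_smul (hwK 2 (by decide)) (hwK 3 (by decide)) hDK]

lemma IsClique.exists_weylGroup_smul_subset_stdClique (hK : IsClique {-1, 0} K)
    (hcard : 11 ≤ #K) : ∃ w ∈ weylGroup, w • K ⊆ stdClique 1 := by
  obtain ⟨C, hCK, hC⟩ := exists_subset_card_eq hcard
  obtain ⟨w, hw, hwC⟩ := (hK.mono hCK).exists_weylGroup_half_basicVec_mem hC
  obtain ⟨ε, hε⟩ := ((isClique_smul_iff hw).2 hK).exists_subset_stdClique fun s c =>
    smul_finset_subset_smul_finset hCK (hwC s c)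
  obtain ⟨u, hu, huε⟩ := exists_weylGroup_smul_stdClique_subset_stdClique_one ε
  refine ⟨u * w, weylGroup.mul_mem hu hw, ?_⟩
  rw [mul_smul]
  exact (smul_finset_subset_smul_finset hε).trans huε

end StandardCliques

section Counting

variable {G α : Type*} [Group G] [MulAction G α] [DecidableEq α]

lemma card_filter_mem_eq_of_smul {𝓕 : Finset (Finset α)} {x t : α} {g : G} (hgx : g • x = t)
    (hg : ∀ K, g • K ∈ 𝓕 ↔ K ∈ 𝓕) : #{K ∈ 𝓕 | x ∈ K} = #{K ∈ 𝓕 | t ∈ K} := by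
  refine card_nbij' (g • ·) (g⁻¹ • ·) (fun K hK => ?_) (fun K hK => ?_)
    (fun K _ => inv_smul_smul g K) (fun K _ => smul_inv_smul g K)
  · obtain ⟨hK, hxK⟩ := mem_filter.1 hK
    exact mem_filter.2 ⟨(hg K).2 hK, hgx ▸ smul_mem_smul_finset hxK⟩
  · obtain ⟨hK, htK⟩ := mem_filter.1 hK
    refine mem_filter.2 ⟨(hg _).1 ((smul_inv_smul g K).symm ▸ hK), ?_⟩
    rwa [mem_inv_smul_finset_iff, hgx]

-- Count the pairs `x ∈ K` with `x ∈ X` and `K ∈ 𝓕`.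
lemma card_mul_eq_card_mul_card_filter_mem {𝓕 : Finset (Finset α)} {X : Finset α} {t : α} {n : ℕ}
    (hn : ∀ K ∈ 𝓕, #{x ∈ X | x ∈ K} = n)
    (htrans : ∀ x ∈ X, ∃ g : G, g • x = t ∧ ∀ K, g • K ∈ 𝓕 ↔ K ∈ 𝓕) :
    #𝓕 * n = #X * #{K ∈ 𝓕 | t ∈ K} := by
  have hcount := sum_card_bipartiteAbove_eq_sum_card_bipartiteBelow
    (s := X) (t := 𝓕) fun x K => x ∈ K
  have hX (x) (hx : x ∈ X) : #{K ∈ 𝓕 | x ∈ K} = #{K ∈ 𝓕 | t ∈ K} := by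
    obtain ⟨g, hgx, hg⟩ := htrans x hx
    exact card_filter_mem_eq_of_smul hgx hg
  exact (sum_const_nat hn).symm.trans (hcount.symm.trans (sum_const_nat hX))

end Counting

section TwelveCliques

variable {K : Finset (Fin 8 → ℝ)}

lemma IsClique.exists_superset_card_eq_twelve (hK : IsClique {-1, 0} K) (hcard : 11 ≤ #K) :
    ∃ L, K ⊆ L ∧ IsClique {-1, 0} L ∧ #L = 12 := by
  obtain ⟨w, hw, hwK⟩ := hK.exists_weylGroup_smul_subset_stdClique hcard
  refine ⟨w⁻¹ • stdClique 1, smul_finset_subset_iff.1 hwK, ?_, ?_⟩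
  · exact (isClique_smul_iff (weylGroup.inv_mem hw)).2 (isClique_stdClique 1)
  · rw [card_smul_finset, card_stdClique]

lemma IsClique.card_le_twelve (hK : IsClique {-1, 0} K) : #K ≤ 12 := by
  by_contra! hcard
  obtain ⟨L, hKL, -, hL⟩ := hK.exists_superset_card_eq_twelve (by lia)
  exact (card_le_card hKL).not_gt (hL ▸ hcard)

lemma IsClique.exists_weylGroup_smul_eq_stdClique (hK : IsClique {-1, 0} K) (hcard : #K = 12) :
    ∃ w ∈ weylGroup, w • K = stdClique 1 := by
  obtain ⟨w, hw, hwK⟩ := hK.exists_weylGroup_smul_subset_stdClique (by lia)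
  refine ⟨w, hw, eq_of_subset_of_card_le hwK ?_⟩
  rw [card_smul_finset, hcard, card_stdClique]

lemma IsClique.exists_weylGroup_smul_eq {L : Finset (Fin 8 → ℝ)} (hK : IsClique {-1, 0} K)
    (hKcard : #K = 12) (hL : IsClique {-1, 0} L) (hLcard : #L = 12) :
    ∃ w ∈ weylGroup, w • K = L := by
  obtain ⟨u, hu, huK⟩ := hK.exists_weylGroup_smul_eq_stdClique hKcard
  obtain ⟨v, hv, hvL⟩ := hL.exists_weylGroup_smul_eq_stdClique hLcard
  exact ⟨v⁻¹ * u, weylGroup.mul_mem (weylGroup.inv_mem hv) hu,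
    by rw [mul_smul, huK, ← hvL, inv_smul_smul]⟩

lemma IsClique.exists_eq_image (hK : IsClique {-1, 0} K) (hcard : #K = 12) :
    ∃ v : (Fin 2 ⊕ Fin 2) × Fin 3 → Fin 8 → ℝ,
      (∀ a b, v a ⬝ᵥ v b = (gram a b : ℤ)) ∧ K = univ.image v := by
  obtain ⟨w, hw, hwK⟩ := hK.exists_weylGroup_smul_eq_stdClique hcard
  refine ⟨fun a => w⁻¹ • half (stdVec 1 a), fun a b => ?_, ?_⟩
  · rw [smul_dotProduct_smul_of_mem (weylGroup.inv_mem hw), half_stdVec_dotProduct]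
  · rw [← inv_smul_smul w K, hwK, stdClique, smul_finset_def, image_image]
    rfl

open Classical in
/-- The cliques of size twelve containing the first `n` vectors of the frame. -/
def framedCliques (n : ℕ) : Finset (Finset (Fin 8 → ℝ)) :=
  {K ∈ (rootVecs.toFinset.image half).powersetCard 12 |
    IsClique {-1, 0} K ∧ ∀ i : Fin 4, i < n → half (frame i) ∈ K}

lemma mem_framedCliques {n : ℕ} : K ∈ framedCliques n ↔
    IsClique {-1, 0} K ∧ #K = 12 ∧ ∀ i : Fin 4, i < n → half (frame i) ∈ K := by
  simp only [framedCliques, mem_filter, mem_powersetCard]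
  refine ⟨fun h => ⟨h.2.1, h.1.2, h.2.2⟩, fun h => ⟨⟨fun x hx => ?_, h.2.1⟩, h.1, h.2.2⟩⟩
  obtain ⟨z, hz, rfl⟩ := exists_half_eq (h.1.1 x hx)
  exact mem_image_of_mem half (List.mem_toFinset.2 hz)

lemma smul_mem_framedCliques_iff {k : Fin 4} {w : (Fin 8 → ℝ) ≃ₗ[ℝ] (Fin 8 → ℝ)}
    (hw : w ∈ weylGroup) (hwk : ∀ i < k, w • half (frame i) = half (frame i)) :
    w • K ∈ framedCliques k ↔ K ∈ framedCliques k := by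
  rw [mem_framedCliques, mem_framedCliques, isClique_smul_iff hw, card_smul_finset]
  refine and_congr_right' (and_congr_right' (forall₂_congr fun i hi => ?_))
  rw [← smul_mem_smul_finset_iff w (s := K), hwk i hi]

lemma filter_frame_mem_framedCliques (k : Fin 4) :
    {K ∈ framedCliques k | half (frame k) ∈ K} = framedCliques (k + 1) := by
  ext K
  simp only [mem_filter, mem_framedCliques, and_assoc, Nat.lt_succ_iff_lt_or_eq, or_imp,
    forall_and, Fin.val_inj, forall_eq]

lemma card_filter_gram_eq (k : Fin 4) (x : Fin 4 → (Fin 2 ⊕ Fin 2) × Fin 3)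
    (hx : ∀ i < k, ∀ j < i, gram (x i) (x j) = gram (frameIndex i) (frameIndex j)) :
    #{y | ∀ i < k, gram y (x i) = gram (frameIndex k) (frameIndex i)} = ![12, 2, 9, 2] k := by
  have hone : ∀ a : (Fin 2 ⊕ Fin 2) × Fin 3, #{y | gram y a = -1} = 2 := by
    decide +kernel
  have htwo : ∀ a b : (Fin 2 ⊕ Fin 2) × Fin 3, gram b a = -1 →
      #{y | gram y a = 0 ∧ gram y b = 0} = 9 := by
    decide +kernel
  have hthree : ∀ a b : (Fin 2 ⊕ Fin 2) × Fin 3, gram b a = -1 →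
      ∀ c, gram c a = 0 → gram c b = 0 →
      #{y | gram y a = 0 ∧ gram y b = 0 ∧ gram y c = -1} = 2 := by
    decide +kernel
  fin_cases k
  · simp
  · simpa [Fin.forall_fin_succ, show gram (frameIndex 1) (frameIndex 0) = -1 from rfl]
      using hone (x 0)
  · have h10 : gram (x 1) (x 0) = -1 := hx 1 (by decide) 0 (by decide)
    have h : gram (frameIndex 2) (frameIndex 0) = 0 ∧ gram (frameIndex 2) (frameIndex 1) = 0 := by
      decide
    simpa [Fin.forall_fin_succ, h] using htwo (x 0) (x 1) h10
  · have h10 : gram (x 1) (x 0) = -1 := hx 1 (by decide) 0 (by decide)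
    have h20 : gram (x 2) (x 0) = 0 := hx 2 (by decide) 0 (by decide)
    have h21 : gram (x 2) (x 1) = 0 := hx 2 (by decide) 1 (by decide)
    have h : gram (frameIndex 3) (frameIndex 0) = 0 ∧ gram (frameIndex 3) (frameIndex 1) = 0 ∧
        gram (frameIndex 3) (frameIndex 2) = -1 := by
      decide
    simpa [Fin.forall_fin_succ, h] using hthree (x 0) (x 1) h10 (x 2) h20 h21

lemma card_filter_frameClass_mem {k : Fin 4} (hK : K ∈ framedCliques k) :
    #{x ∈ (frameClass k).toFinset.image half | x ∈ K} = ![12, 2, 9, 2] k := by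
  obtain ⟨hclique, hcard, hframe⟩ := mem_framedCliques.1 hK
  obtain ⟨v, hv, rfl⟩ := hclique.exists_eq_image hcard
  have hindex (i : Fin 4) : ∃ a, i < k → v a = half (frame i) := by
    by_cases hi : i < k
    · obtain ⟨a, -, ha⟩ := mem_image.1 (hframe i hi)
      exact ⟨a, fun _ => ha⟩
    · exact ⟨frameIndex 0, fun h => absurd h hi⟩
  choose x hx using hindex
  have hgram (i) (hi : i < k) (j) (hj : j < i) :
      gram (x i) (x j) = gram (frameIndex i) (frameIndex j) := by
    have h := hv (x i) (x j)
    rwa [hx i hi, hx j (hj.trans hi), half_frame_dotProduct, Int.cast_inj, eq_comm] at h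
  have himage : {x ∈ (frameClass k).toFinset.image half | x ∈ univ.image v} =
      ({y | ∀ i < k, gram y (x i) = gram (frameIndex k) (frameIndex i)} : Finset _).image v := by
    have hdot (a i) (hi : i < k) : v a ⬝ᵥ half (frame i) = half (frame k) ⬝ᵥ half (frame i) ↔
        gram a (x i) = gram (frameIndex k) (frameIndex i) := by
      rw [← hx i hi, hv, hx i hi, half_frame_dotProduct, Int.cast_inj]
    ext y
    simp only [mem_filter, mem_image, List.mem_toFinset, mem_univ, true_and]
    constructor
    · rintro ⟨⟨z, hz, rfl⟩, a, ha⟩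
      exact ⟨a, fun i hi => (hdot a i hi).1 (ha ▸ (half_mem_frameClass_iff.1 hz).2 i hi), ha⟩
    · rintro ⟨a, ha, rfl⟩
      have hroot : isRoot (v a) := hclique.1 _ (mem_image_of_mem v (mem_univ a))
      obtain ⟨z, -, hz⟩ := exists_half_eq hroot
      refine ⟨⟨z, half_mem_frameClass_iff.2 ?_, hz⟩, a, rfl⟩
      rw [hz]
      exact ⟨hroot, fun i hi => (hdot a i hi).2 (ha i hi)⟩
  rw [himage, card_image_of_injective _ (injective_of_dotProduct_eq_gram hv)]
  exact card_filter_gram_eq k x hgram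

lemma card_framedCliques_mul (k : Fin 4) :
    #(framedCliques k) * ![12, 2, 9, 2] k = ![240, 56, 72, 20] k * #(framedCliques (k + 1)) := by
  have hnodup : (frameClass k).Nodup := nodup_rootVecs.filter _
  rw [← filter_frame_mem_framedCliques, ← length_frameClass, ← List.toFinset_card_of_nodup hnodup,
    ← card_image_of_injective _ half_injective]
  refine card_mul_eq_card_mul_card_filter_mem (G := (Fin 8 → ℝ) ≃ₗ[ℝ] (Fin 8 → ℝ))
    (fun K hK => card_filter_frameClass_mem hK) fun x hx => ?_
  obtain ⟨z, hz, rfl⟩ := mem_image.1 hx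
  obtain ⟨w, hw, hwk, hwz⟩ := exists_weylGroup_smul_half_eq_frame (List.mem_toFinset.1 hz)
  exact ⟨w, hwz, fun K => smul_mem_framedCliques_iff hw hwk⟩

lemma exists_gram_eq_neg_one : ∀ a b : (Fin 2 ⊕ Fin 2) × Fin 3, gram a b = -1 →
    ∃ c, gram a c = -1 ∧ gram b c = -1 := by
  decide +kernel

lemma half_basicVec_mem_of_mem_framedCliques (hK : K ∈ framedCliques 4) (s c) :
    half (basicVec (Sum.inl s) c) ∈ K := by
  obtain ⟨hclique, hcard, hframe⟩ := mem_framedCliques.1 hK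
  obtain ⟨v, hv, rfl⟩ := hclique.exists_eq_image hcard
  have hzero : half (basicVec (Sum.inl s) 0) ∈ univ.image v := by
    fin_cases s
    exacts [hframe 0 (by decide), hframe 2 (by decide)]
  have hone : half (basicVec (Sum.inl s) 1) ∈ univ.image v := by
    fin_cases s
    exacts [hframe 1 (by decide), hframe 3 (by decide)]
  obtain ⟨a, -, ha⟩ := mem_image.1 hzero
  obtain ⟨b, -, hb⟩ := mem_image.1 hone
  have hab : gram a b = -1 := by
    have h := hv a b
    rw [ha, hb, half_basicVec_dotProduct, Int.cast_inj] at h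
    rw [← h]
    simp only [gram, if_true, zero_ne_one, if_false]
  obtain ⟨d, had, hbd⟩ := exists_gram_eq_neg_one a b hab
  have hthird : -half (basicVec (Sum.inl s) 0) - half (basicVec (Sum.inl s) 1) ∈ univ.image v := by
    rw [← ha, ← hb, ← eq_neg_sub_of_dotProduct_eq_neg_one (w := v d)]
    · exact mem_image_of_mem v (mem_univ d)
    all_goals simp [hv, hab, had, hbd, gram_eq_two_iff.2]
  rw [← one_smul ((Fin 8 → ℝ) ≃ₗ[ℝ] (Fin 8 → ℝ)) (univ.image v)]
  exact half_basicVec_mem_smul (one_smul _ _) (one_smul _ _) ⟨hzero, hone, hthird⟩ c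

lemma stdClique_injective : Function.Injective stdClique := fun ε δ h => by
  ext1 s
  have hε : half (ε s • basicVec (Sum.inr s) 0) ∈ stdClique ε := half_stdVec_mem ε (Sum.inr s, 0)
  have hδ : half (δ s • basicVec (Sum.inr s) 0) ∈ stdClique δ := half_stdVec_mem δ (Sum.inr s, 0)
  rw [← h] at hδ
  exact (isClique_stdClique ε).units_eq_of_smul_basicVec_mem hε hδ

lemma framedCliques_four : framedCliques 4 = univ.image stdClique := by
  ext K
  rw [mem_image_univ_iff_mem_range, Set.mem_range]
  constructor
  · intro hK
    obtain ⟨hclique, hcard, -⟩ := mem_framedCliques.1 hK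
    obtain ⟨ε, hε⟩ := hclique.exists_subset_stdClique (half_basicVec_mem_of_mem_framedCliques hK)
    exact ⟨ε, (eq_of_subset_of_card_le hε (by rw [card_stdClique, hcard])).symm⟩
  · rintro ⟨ε, rfl⟩
    refine mem_framedCliques.2 ⟨isClique_stdClique ε, card_stdClique ε, fun i _ => ?_⟩
    rw [← stdVec_frameIndex ε]
    exact half_stdVec_mem ε _

lemma card_framedCliques_four : #(framedCliques 4) = 4 := by
  rw [framedCliques_four, card_image_of_injective _ stdClique_injective]
  simp

lemma card_framedCliques_zero : #(framedCliques 0) = 179200 := by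
  have hmul := card_framedCliques_mul
  have hfour := card_framedCliques_four
  -- Keeps the kernel from evaluating `framedCliques` when it compares products.
  obtain ⟨f, hf⟩ : ∃ f : ℕ → ℕ, ∀ n, #(framedCliques n) = f n := ⟨_, fun _ => rfl⟩
  simp only [hf] at hmul hfour ⊢
  have h0 : f 0 * 12 = 240 * f 1 := hmul 0
  have h1 : f 1 * 2 = 56 * f 2 := hmul 1
  have h2 : f 2 * 9 = 72 * f 3 := hmul 2
  have h3 : f 3 * 2 = 20 * f 4 := hmul 3
  omega

end TwelveCliques

/-- The maximal size of a clique in `Γ_{-1,0}` is twelve (it is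
attained and never exceeded), there are no maximal cliques of size eleven, there
are exactly 179200 cliques of size twelve, and the Weyl group acts transitively on
the cliques of size twelve in `Γ_{-1,0}`. -/
theorem stmt_18 :
    (∀ K : Finset (Fin 8 → ℝ), IsClique {-1, 0} K → K.card ≤ 12) ∧
    (∃ K : Finset (Fin 8 → ℝ), IsClique {-1, 0} K ∧ K.card = 12) ∧
    (∀ K : Finset (Fin 8 → ℝ), IsMaxClique {-1, 0} K → K.card ≠ 11) ∧
    ({K : Finset (Fin 8 → ℝ) | IsClique {-1, 0} K ∧ K.card = 12}.ncard = 179200) ∧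
    (∀ K1 K2 : Finset (Fin 8 → ℝ),
      IsClique {-1, 0} K1 → K1.card = 12 → IsClique {-1, 0} K2 → K2.card = 12 →
      ∃ w : (Fin 8 → ℝ) ≃ₗ[ℝ] (Fin 8 → ℝ), IsWeyl w ∧
        ⇑w '' (K1 : Set (Fin 8 → ℝ)) = (K2 : Set (Fin 8 → ℝ))) := by
  refine ⟨fun K hK => hK.card_le_twelve,
    ⟨stdClique 1, isClique_stdClique 1, card_stdClique 1⟩,
    fun K hmax hcard => ?_, ?_, fun K L hK hKcard hL hLcard => ?_⟩
  · obtain ⟨L, hKL, hL, hLcard⟩ := hmax.1.exists_superset_card_eq_twelve hcard.ge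
    rw [hmax.2 L hL hKL, hcard] at hLcard
    norm_num at hLcard
  · rw [← card_framedCliques_zero, ← Set.ncard_coe_finset]
    congr 1
    ext K
    simp [mem_framedCliques]
  · obtain ⟨w, hw, rfl⟩ := hK.exists_weylGroup_smul_eq hKcard hL hLcard
    exact ⟨w, hw, (coe_smul_finset w K).symm⟩
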